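/- Let w ∈ (0,1), K > 0, σ_F > 0, set α = 1/(1−w) and B = ((1−w)/w)·K^(−α), and define P : (0,∞) → ℝ by P(x) = B·x^α. Then for every x > 0, P is differentiable at x and its derivative satisfies P′(x)·σ_F = δ·(P(x))^w, where δ = (1/(1−w)) · ((1−w)/w)^(1−w) · K^(−1) · σ_F. (This is the diffusion-coefficient identity underlying Theorem 1: the AMM token price follows a CEV process with exponent β = w and volatility parameter δ.) -/

import Mathlib

/-!
By the power rule `P' x = α * B * x ^ (α - 1)`. Since `α * w = α - 1`, raising
`P x = c * K ^ (-α) * x ^ α`, with `c = (1 - w) / w`, to the power `w` gives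
`c ^ w * K ^ (-(α - 1)) * x ^ (α - 1)`; the factor `c ^ (1 - w) * K ^ (-1)` of `δ` completes
the powers of `c` and `K` to `c * K ^ (-α) = B`.
-/

/-- With `α = 1 / (1 - w)`, `B = ((1 - w) / w) * K ^ (-α)`, and
`P(x) = B * x ^ α`, for every `x > 0` the price is differentiable at `x` and its derivative
satisfies `P′(x) * σ_F = δ * (P x) ^ w`, where
`δ = (1 / (1 - w)) * ((1 - w) / w) ^ (1 - w) * K ^ (-1) * σ_F`: the diffusion-coefficient
identity underlying the CEV price process with exponent `β = w`. -/
theorem cev_diffusion_coefficient_identity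
    (w K σF α B : ℝ) (hw0 : 0 < w) (hw1 : w < 1) (hK : 0 < K) (hσF : 0 < σF)
    (hα : α = 1 / (1 - w)) (hB : B = ((1 - w) / w) * K ^ (-α)) :
    ∀ x : ℝ, 0 < x →
      DifferentiableAt ℝ (fun x : ℝ => B * x ^ α) x ∧
      deriv (fun x : ℝ => B * x ^ α) x * σF =
        ((1 / (1 - w)) * ((1 - w) / w) ^ (1 - w) * K ^ (-1 : ℝ) * σF) *
          (B * x ^ α) ^ w := by
  intro x hx
  have h1w : 0 < 1 - w := sub_pos.mpr hw1
  have hd : HasDerivAt (fun x : ℝ => B * x ^ α) (B * (α * x ^ (α - 1))) x :=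
    (Real.hasDerivAt_rpow_const (Or.inl hx.ne')).const_mul B
  refine ⟨hd.differentiableAt, ?_⟩
  rw [hd.deriv]
  -- The choice `α = 1 / (1 - w)` is what makes `x ^ (α - 1)` a `w`-th power of `x ^ α`.
  have hαw : α * w = α - 1 := by
    rw [hα]
    field_simp
    ring
  have hc : 0 < (1 - w) / w := div_pos h1w hw0
  have hP : (B * x ^ α) ^ w = ((1 - w) / w) ^ w * K ^ (-(α - 1)) * x ^ (α - 1) := by
    rw [hB, Real.mul_rpow (by positivity) (by positivity),
      Real.mul_rpow hc.le (by positivity), ← Real.rpow_mul hK.le, ← Real.rpow_mul hx.le,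
      neg_mul, hαw]
  have hcc : ((1 - w) / w) ^ (1 - w) * ((1 - w) / w) ^ w = (1 - w) / w := by
    rw [← Real.rpow_add hc, sub_add_cancel, Real.rpow_one]
  have hKK : K ^ (-1 : ℝ) * K ^ (-(α - 1)) = K ^ (-α) := by
    rw [← Real.rpow_add hK]
    congr 1
    ring
  rw [hP, ← hα]
  calc B * (α * x ^ (α - 1)) * σF
      = α * ((1 - w) / w) * K ^ (-α) * σF * x ^ (α - 1) := by
        rw [hB]
        ring
    _ = α * (((1 - w) / w) ^ (1 - w) * ((1 - w) / w) ^ w) *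
          (K ^ (-1 : ℝ) * K ^ (-(α - 1))) * σF * x ^ (α - 1) := by rw [hcc, hKK]
    _ = _ := by ring
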